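/- Palm correction estimate, first power of kernel (Lemma 4.5, second part): fix θ with −√2 < θ < √2 and R ∈ ℕ. With x_θ^N = x/N + θ and T^N_{r,∞}(x) = { y ∈ ℝ : r/N ≤ |x_θ^N − y| }, one has lim_{r→∞} limsup_{N→∞} sup_{|x| < R} | ∫_{T^N_{r,∞}(x)} L^N(x_θ^N, y) / ( |x_θ^N − y| · L^N(x_θ^N, x_θ^N) ) dy | = 0. -/

import Mathlib

open Real MeasureTheory Filter Set

/-- Physicists' Hermite polynomial `H_n(x) = (-1)^n e^{x^2} (d/dx)^n e^{-x^2}`. -/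
noncomputable def hermiteP (n : ℕ) (x : ℝ) : ℝ :=
  (-1 : ℝ) ^ n * Real.exp (x ^ 2) * iteratedDeriv n (fun t => Real.exp (-t ^ 2)) x

/-- Oscillator wave function `ψ_n(x) = (√π 2^n n!)^{-1/2} e^{-x^2/2} H_n(x)`. -/
noncomputable def osc (n : ℕ) (x : ℝ) : ℝ :=
  (Real.sqrt (Real.sqrt Real.pi * 2 ^ n * (n.factorial : ℝ)))⁻¹ *
    Real.exp (-x ^ 2 / 2) * hermiteP n x

/-- The kernel `K^N(x,y) = Σ_{k=0}^{N-1} ψ_k(x) ψ_k(y)`. -/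
noncomputable def kerK (N : ℕ) (x y : ℝ) : ℝ :=
  ∑ k ∈ Finset.range N, osc k x * osc k y

/-- The rescaled kernel `L^N(x,y) = N^{-1/2} K^N(√N x, √N y)`. -/
noncomputable def kerL (N : ℕ) (x y : ℝ) : ℝ :=
  (Real.sqrt (N : ℝ))⁻¹ * kerK N (Real.sqrt (N : ℝ) * x) (Real.sqrt (N : ℝ) * y)

open Polynomial in
/-- Polynomial form of the Hermite polynomials. -/
noncomputable def hp : ℕ → Polynomial ℝ
  | 0 => 1
  | n + 1 => C 2 * X * hp n - derivative (hp n)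

open Polynomial in
lemma hp_deriv (n : ℕ) : derivative (hp (n + 1)) = C (2 * ((n : ℝ) + 1)) * hp n := by
  induction n with
  | zero => simp [hp]
  | succ n ih =>
    have h1 : hp (n + 2) = C 2 * X * hp (n + 1) - derivative (hp (n + 1)) := rfl
    have h2 : hp (n + 1) = C 2 * X * hp n - derivative (hp n) := rfl
    rw [h1, derivative_sub, ih, derivative_mul, ih, derivative_mul, derivative_mul]
    simp only [derivative_C, derivative_X]
    rw [h2]
    simp only [Nat.cast_add, Nat.cast_one, map_mul, map_add, map_one]
    ring

lemma hp_rec (n : ℕ) (x : ℝ) :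
    (hp (n + 2)).eval x = 2 * x * (hp (n + 1)).eval x - 2 * ((n : ℝ) + 1) * (hp n).eval x := by
  have h1 : hp (n + 2) = Polynomial.C 2 * Polynomial.X * hp (n + 1)
      - Polynomial.derivative (hp (n + 1)) := rfl
  rw [h1, hp_deriv]
  simp

lemma hp_one (x : ℝ) : (hp 1).eval x = 2 * x := by
  simp [hp]

lemma hasDerivAt_hp_gauss (n : ℕ) (x : ℝ) :
    HasDerivAt (fun t => (hp n).eval t * Real.exp (-t ^ 2))
      (-((hp (n + 1)).eval x * Real.exp (-x ^ 2))) x := by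
  have h1 : hp (n + 1) = Polynomial.C 2 * Polynomial.X * hp n
      - Polynomial.derivative (hp n) := rfl
  have h2 := (hp n).hasDerivAt x
  have h3 : HasDerivAt (fun t : ℝ => Real.exp (-t ^ 2)) (Real.exp (-x ^ 2) * (-(2 * x))) x := by
    have := ((hasDerivAt_pow 2 x).neg).exp
    simpa using this
  refine (h2.mul h3).congr_deriv ?_
  rw [h1]
  simp
  ring

lemma iteratedDeriv_gauss (n : ℕ) :
    iteratedDeriv n (fun t : ℝ => Real.exp (-t ^ 2)) =
      fun x => (-1 : ℝ) ^ n * ((hp n).eval x * Real.exp (-x ^ 2)) := by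
  induction n with
  | zero => simp [hp]
  | succ n ih =>
    rw [iteratedDeriv_succ, ih]
    funext x
    rw [((hasDerivAt_hp_gauss n x).const_mul ((-1 : ℝ) ^ n)).deriv]
    ring

lemma hermiteP_eq (n : ℕ) (x : ℝ) : hermiteP n x = (hp n).eval x := by
  unfold hermiteP
  rw [iteratedDeriv_gauss]
  have h1 : ((-1 : ℝ) ^ n) * (-1) ^ n = 1 := by
    rw [← mul_pow]; simp
  have h2 : Real.exp (x ^ 2) * Real.exp (-x ^ 2) = 1 := by
    rw [← Real.exp_add]; simp
  calc (-1 : ℝ) ^ n * Real.exp (x ^ 2) * ((-1 : ℝ) ^ n * ((hp n).eval x * Real.exp (-x ^ 2)))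
      = ((-1 : ℝ) ^ n * (-1) ^ n) * (Real.exp (x ^ 2) * Real.exp (-x ^ 2)) * (hp n).eval x := by ring
    _ = _ := by rw [h1, h2]; ring

/-- Normalising constant. -/
noncomputable def cn (n : ℕ) : ℝ := (Real.sqrt (Real.sqrt Real.pi * 2 ^ n * (n.factorial : ℝ)))⁻¹

lemma osc_eq (n : ℕ) (x : ℝ) : osc n x = cn n * Real.exp (-x ^ 2 / 2) * (hp n).eval x := by
  unfold osc cn
  rw [hermiteP_eq]

lemma cn_pos (n : ℕ) : 0 < cn n := by
  unfold cn
  positivity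

lemma cn_sq (n : ℕ) : cn n ^ 2 * (Real.sqrt Real.pi * 2 ^ n * (n.factorial : ℝ)) = 1 := by
  unfold cn
  have h : 0 < Real.sqrt Real.pi * 2 ^ n * (n.factorial : ℝ) := by positivity
  rw [inv_pow, Real.sq_sqrt h.le, inv_mul_cancel₀ h.ne']

lemma cn_succ (n : ℕ) : cn n = Real.sqrt (2 * ((n : ℝ) + 1)) * cn (n + 1) := by
  unfold cn
  have : Real.sqrt Real.pi * 2 ^ (n + 1) * ((n + 1).factorial : ℝ)
      = (2 * ((n : ℝ) + 1)) * (Real.sqrt Real.pi * 2 ^ n * (n.factorial : ℝ)) := by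
    rw [Nat.factorial_succ]; push_cast; ring
  have h : Real.sqrt (2 * ((n : ℝ) + 1)) ≠ 0 := by positivity
  rw [this, Real.sqrt_mul (by positivity) (Real.sqrt Real.pi * 2 ^ n * (n.factorial : ℝ)),
    mul_inv, ← mul_assoc, mul_inv_cancel₀ h, one_mul]

lemma osc_one (x : ℝ) : Real.sqrt 2 * osc 1 x = 2 * x * osc 0 x := by
  rw [osc_eq, osc_eq, hp_one, cn_succ 0]
  simp [hp]
  ring

lemma osc_rec (n : ℕ) (x : ℝ) :
    Real.sqrt (2 * ((n : ℝ) + 2)) * osc (n + 2) x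
      = 2 * x * osc (n + 1) x - Real.sqrt (2 * ((n : ℝ) + 1)) * osc n x := by
  have h1 := cn_succ n
  have h2 := cn_succ (n + 1)
  have h3 : Real.sqrt (2 * ((n : ℝ) + 1)) ^ 2 = 2 * ((n : ℝ) + 1) :=
    Real.sq_sqrt (by positivity)
  have e : (((n + 1 : ℕ) : ℝ) + 1) = (n : ℝ) + 2 := by push_cast; ring
  rw [e] at h2
  rw [osc_eq, osc_eq, osc_eq, hp_rec, h1]
  have h2' : Real.sqrt (2 * ((n : ℝ) + 2)) * cn (n + 2) = cn (n + 1) := h2.symm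
  linear_combination (Real.exp (-x ^ 2 / 2) * (2 * x * (hp (n + 1)).eval x
    - 2 * ((n : ℝ) + 1) * (hp n).eval x)) * h2'
    + cn (n + 1) * Real.exp (-x ^ 2 / 2) * (hp n).eval x * h3

lemma osc_hasDerivAt (n : ℕ) (x : ℝ) :
    HasDerivAt (osc n) (x * osc n x - Real.sqrt (2 * ((n : ℝ) + 1)) * osc (n + 1) x) x := by
  have h1 : hp (n + 1) = Polynomial.C 2 * Polynomial.X * hp n
      - Polynomial.derivative (hp n) := rfl
  have h2 := (hp n).hasDerivAt x
  have h3 : HasDerivAt (fun t : ℝ => Real.exp (-t ^ 2 / 2)) (Real.exp (-x ^ 2 / 2) * (-x)) x := by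
    have := (((hasDerivAt_pow 2 x).neg).div_const 2).exp
    refine this.congr_deriv ?_
    simp
    ring
  have h4 : osc n = fun t => cn n * Real.exp (-t ^ 2 / 2) * (hp n).eval t := by
    funext t; exact osc_eq n t
  have h5 := (h3.const_mul (cn n)).mul h2
  rw [osc_eq, osc_eq, h4]
  refine h5.congr_deriv ?_
  rw [h1]
  have h6 := cn_succ n
  rw [h6]
  simp
  ring

/-- Derivative of the diagonal kernel. -/
lemma kerK_diag_hasDerivAt (n : ℕ) (x : ℝ) :
    HasDerivAt (fun t => kerK (n + 1) t t)
      (-(Real.sqrt (2 * ((n : ℝ) + 1)) * osc n x * osc (n + 1) x)) x := by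
  induction n with
  | zero =>
    have h := (osc_hasDerivAt 0 x).mul (osc_hasDerivAt 0 x)
    have e : (fun t => kerK (0 + 1) t t) = (osc 0 * osc 0) := by
      funext t; simp [kerK]
    rw [e]
    refine h.congr_deriv ?_
    have := osc_one x
    simp
    linear_combination - osc 0 x * this
  | succ n ih =>
    have h := ih.add ((osc_hasDerivAt (n + 1) x).mul (osc_hasDerivAt (n + 1) x))
    have e : (fun t => kerK (n + 1 + 1) t t)
        = (fun t => kerK (n + 1) t t) + (osc (n + 1) * osc (n + 1)) := by
      funext t; simp [kerK, Finset.sum_range_succ]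
    rw [e]
    refine h.congr_deriv ?_
    have := osc_rec n x
    have e : (((n + 1 : ℕ) : ℝ) + 1) = (n : ℝ) + 2 := by push_cast; ring
    rw [e]
    linear_combination - osc (n + 1) x * this

/-- Confluent Christoffel-Darboux formula. -/
lemma kerK_diag (n : ℕ) (x : ℝ) :
    kerK (n + 1) x x = ((n : ℝ) + 1) * (osc n x ^ 2 + osc (n + 1) x ^ 2)
      - Real.sqrt (2 * ((n : ℝ) + 1)) * x * osc n x * osc (n + 1) x := by
  induction n with
  | zero =>
    have h := osc_one x
    have h3 : Real.sqrt 2 ^ 2 = 2 := Real.sq_sqrt (by positivity)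
    simp [kerK]
    linear_combination (-(Real.sqrt 2 * osc 1 x) / 2) * h + osc 1 x ^ 2 / 2 * h3
  | succ n ih =>
    have e : kerK (n + 1 + 1) x x = kerK (n + 1) x x + osc (n + 1) x * osc (n + 1) x := by
      simp [kerK, Finset.sum_range_succ]
    have h := osc_rec n x
    have e : (((n + 1 : ℕ) : ℝ) + 1) = (n : ℝ) + 2 := by push_cast; ring
    have ha : Real.sqrt (2 * ((n : ℝ) + 1)) ^ 2 = 2 * ((n : ℝ) + 1) :=
      Real.sq_sqrt (by positivity)
    have hb : Real.sqrt (2 * ((n : ℝ) + 2)) ^ 2 = 2 * ((n : ℝ) + 2) :=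
      Real.sq_sqrt (by positivity)
    rw [‹kerK (n + 1 + 1) x x = _›, ih, e]
    push_cast
    set A := Real.sqrt (2 * ((n : ℝ) + 2))
    set B := Real.sqrt (2 * ((n : ℝ) + 1))
    linear_combination (-(A * osc (n + 2) x - B * osc n x) / 2) * h
      + osc (n + 2) x ^ 2 / 2 * hb - osc n x ^ 2 / 2 * ha

lemma osc_zero_rec (n : ℕ) :
    ((n : ℝ) + 2) * osc (n + 2) 0 ^ 2 = ((n : ℝ) + 1) * osc n 0 ^ 2 := by
  have h := osc_rec n 0
  have ha : Real.sqrt (2 * ((n : ℝ) + 1)) ^ 2 = 2 * ((n : ℝ) + 1) :=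
    Real.sq_sqrt (by positivity)
  have hb : Real.sqrt (2 * ((n : ℝ) + 2)) ^ 2 = 2 * ((n : ℝ) + 2) :=
    Real.sq_sqrt (by positivity)
  have h' : (Real.sqrt (2 * ((n : ℝ) + 2)) * osc (n + 2) 0) ^ 2
      = (Real.sqrt (2 * ((n : ℝ) + 1)) * osc n 0) ^ 2 := by
    rw [h]; ring
  rw [mul_pow, mul_pow, ha, hb] at h'
  linarith

lemma osc_zero_sq : osc 0 0 ^ 2 * Real.sqrt Real.pi = 1 := by
  have := cn_sq 0
  rw [osc_eq]
  simp [hp] at this ⊢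
  exact this

lemma osc_even_lower (m : ℕ) :
    1 / (4 * Real.pi) ≤ ((m : ℝ) + 1) * (osc (2 * (m + 1)) 0 ^ 2) ^ 2 := by
  induction m with
  | zero =>
    have h := osc_zero_rec 0
    have h0 := osc_zero_sq
    have hs : Real.sqrt Real.pi ^ 2 = Real.pi := Real.sq_sqrt Real.pi_pos.le
    have hp := Real.pi_pos
    rw [div_le_iff₀ (by positivity)]
    simp at h ⊢
    have h1 : osc 2 0 ^ 2 = osc 0 0 ^ 2 / 2 := by linarith
    rw [h1, ← hs]
    apply le_of_eq
    linear_combination (-(1 + osc 0 0 ^ 2 * Real.sqrt Real.pi)) * h0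
  | succ m ih =>
    have h := osc_zero_rec (2 * (m + 1))
    refine ih.trans ?_
    have e : 2 * (m + 1 + 1) = 2 * (m + 1) + 2 := by ring
    rw [e]
    set p := osc (2 * (m + 1)) 0 ^ 2
    set q := osc (2 * (m + 1) + 2) 0 ^ 2
    push_cast at h ⊢
    have hq : q = (2 * (m : ℝ) + 3) / (2 * m + 4) * p := by
      field_simp
      linarith
    rw [hq, mul_pow, ← mul_assoc]
    apply mul_le_mul_of_nonneg_right _ (sq_nonneg p)
    rw [div_pow, ← mul_div_assoc, le_div_iff₀ (by positivity)]
    have : (0 : ℝ) ≤ m := by positivity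
    nlinarith

lemma kerK_zero_lower (N : ℕ) (hN : 2 ≤ N) :
    (N : ℝ) / (2 * Real.pi) ≤ kerK N 0 0 ^ 2 := by
  obtain ⟨n, rfl⟩ : ∃ n, N = n + 1 := ⟨N - 1, by omega⟩
  have hK := kerK_diag n 0
  simp only [mul_zero, zero_mul, sub_zero] at hK
  obtain ⟨m, hm1, hm2⟩ : ∃ m : ℕ, 2 * (m + 1) ≤ n + 1 ∧ (2 * (m + 1) = n ∨ 2 * (m + 1) = n + 1) :=
    ⟨(n + 1) / 2 - 1, by omega, by omega⟩
  have h := osc_even_lower m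
  have hp : osc (2 * (m + 1)) 0 ^ 2 ≤ osc n 0 ^ 2 + osc (n + 1) 0 ^ 2 := by
    rcases hm2 with h | h <;> rw [h]
    · linarith [sq_nonneg (osc (n + 1) 0)]
    · linarith [sq_nonneg (osc n 0)]
  have hm1' : 2 * ((m : ℝ) + 1) ≤ (n : ℝ) + 1 := by exact_mod_cast hm1
  rw [hK, mul_pow]
  push_cast
  set p := osc (2 * (m + 1)) 0 ^ 2 with hpdef
  have hp0 : 0 ≤ p := sq_nonneg _
  have hpp : p ^ 2 ≤ (osc n 0 ^ 2 + osc (n + 1) 0 ^ 2) ^ 2 := pow_le_pow_left₀ hp0 hp 2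
  have h4 : ((n : ℝ) + 1) * (1 / (4 * Real.pi)) ≤ ((n : ℝ) + 1) * (((m : ℝ) + 1) * p ^ 2) :=
    mul_le_mul_of_nonneg_left h (by positivity)
  have h5 : ((n : ℝ) + 1) * (((m : ℝ) + 1) * p ^ 2) ≤ ((n : ℝ) + 1) * (((n : ℝ) + 1) / 2 * p ^ 2) := by
    gcongr
    linarith
  have h6 : ((n : ℝ) + 1) ^ 2 * p ^ 2
      ≤ ((n : ℝ) + 1) ^ 2 * (osc n 0 ^ 2 + osc (n + 1) 0 ^ 2) ^ 2 := by gcongr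
  have h7 : ((n : ℝ) + 1) / (2 * Real.pi) = 2 * (((n : ℝ) + 1) * (1 / (4 * Real.pi))) := by
    field_simp; ring
  rw [h7]
  nlinarith

/-- Key differential inequality. -/
lemma kerK_diff_ineq (n : ℕ) (x : ℝ) (hx : |x| ≤ Real.sqrt (2 * ((n : ℝ) + 1))) :
    |Real.sqrt (2 * ((n : ℝ) + 1)) * osc n x * osc (n + 1) x| *
      (Real.sqrt (2 * ((n : ℝ) + 1)) - |x|) ≤ kerK (n + 1) x x := by
  rw [kerK_diag]
  have ha : Real.sqrt (2 * ((n : ℝ) + 1)) ^ 2 = 2 * ((n : ℝ) + 1) :=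
    Real.sq_sqrt (by positivity)
  set c := Real.sqrt (2 * ((n : ℝ) + 1))
  have hc : 0 ≤ c := Real.sqrt_nonneg _
  set u := osc n x
  set v := osc (n + 1) x
  have h1 : c * x * u * v ≤ c * |x| * (|u| * |v|) := by
    calc c * x * u * v ≤ |c * x * u * v| := le_abs_self _
      _ = c * |x| * (|u| * |v|) := by rw [abs_mul, abs_mul, abs_mul, abs_of_nonneg hc]; ring
  have h2 : |c * u * v| = c * (|u| * |v|) := by
    rw [abs_mul, abs_mul, abs_of_nonneg hc]; ring
  rw [h2]
  have h3 : 2 * (|u| * |v|) ≤ u ^ 2 + v ^ 2 := by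
    have := sq_nonneg (|u| - |v|)
    have hu := sq_abs u
    have hv := sq_abs v
    nlinarith
  have h4 : ((n : ℝ) + 1) * (2 * (|u| * |v|)) ≤ ((n : ℝ) + 1) * (u ^ 2 + v ^ 2) := by gcongr
  have h5 : c * (|u| * |v|) * (c - |x|) = c ^ 2 * (|u| * |v|) - c * |x| * (|u| * |v|) := by ring
  rw [h5, ha]
  linarith

lemma kerK_diag_nonneg (N : ℕ) (x : ℝ) : 0 ≤ kerK N x x :=
  Finset.sum_nonneg fun _ _ => mul_self_nonneg _

lemma kerK_lower_pos (n : ℕ) (a : ℝ) (ha0 : 0 ≤ a) (ha : a < Real.sqrt (2 * ((n : ℝ) + 1))) :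
    kerK (n + 1) 0 0 * (Real.sqrt (2 * ((n : ℝ) + 1)) - a)
      ≤ kerK (n + 1) a a * Real.sqrt (2 * ((n : ℝ) + 1)) := by
  set c := Real.sqrt (2 * ((n : ℝ) + 1)) with hcdef
  have hmono : MonotoneOn (fun t => kerK (n + 1) t t / (c - t)) (Icc 0 a) := by
    have hd : ∀ x ∈ Icc 0 a, HasDerivAt (fun t => kerK (n + 1) t t / (c - t))
        ((-(c * osc n x * osc (n + 1) x) * (c - x) - kerK (n + 1) x x * (-1)) / (c - x) ^ 2) x := by
      intro x hx
      exact (kerK_diag_hasDerivAt n x).div ((hasDerivAt_id x).const_sub c)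
        (by have := hx.2; linarith)
    apply monotoneOn_of_deriv_nonneg (convex_Icc 0 a)
    · intro x hx
      exact (hd x hx).continuousAt.continuousWithinAt
    · intro x hx
      exact (hd x (interior_subset hx)).differentiableAt.differentiableWithinAt
    · intro x hx
      have hx := interior_subset hx
      rw [(hd x hx).deriv]
      apply div_nonneg _ (sq_nonneg _)
      have h := kerK_diff_ineq n x (by rw [abs_of_nonneg hx.1]; exact hx.2.trans ha.le)
      rw [abs_of_nonneg hx.1, ← hcdef] at h
      have h2 := le_abs_self (c * osc n x * osc (n + 1) x)
      have h3 : 0 ≤ c - x := by linarith [hx.2]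
      nlinarith [mul_le_mul_of_nonneg_right h2 h3]
  have h := hmono (left_mem_Icc.2 ha0) (right_mem_Icc.2 ha0) ha0
  simp only [sub_zero] at h
  rw [div_le_div_iff₀ (by linarith) (by linarith)] at h
  exact h

lemma kerK_lower_neg (n : ℕ) (a : ℝ) (ha0 : a ≤ 0) (ha : -a < Real.sqrt (2 * ((n : ℝ) + 1))) :
    kerK (n + 1) 0 0 * (Real.sqrt (2 * ((n : ℝ) + 1)) + a)
      ≤ kerK (n + 1) a a * Real.sqrt (2 * ((n : ℝ) + 1)) := by
  set c := Real.sqrt (2 * ((n : ℝ) + 1)) with hcdef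
  have hmono : AntitoneOn (fun t => kerK (n + 1) t t / (c + t)) (Icc a 0) := by
    have hd : ∀ x ∈ Icc a 0, HasDerivAt (fun t => kerK (n + 1) t t / (c + t))
        ((-(c * osc n x * osc (n + 1) x) * (c + x) - kerK (n + 1) x x * 1) / (c + x) ^ 2) x := by
      intro x hx
      exact (kerK_diag_hasDerivAt n x).div ((hasDerivAt_id x).const_add c)
        (by have := hx.1; linarith)
    apply antitoneOn_of_deriv_nonpos (convex_Icc a 0)
    · intro x hx
      exact (hd x hx).continuousAt.continuousWithinAt
    · intro x hx
      exact (hd x (interior_subset hx)).differentiableAt.differentiableWithinAt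
    · intro x hx
      have hx := interior_subset hx
      rw [(hd x hx).deriv]
      apply div_nonpos_of_nonpos_of_nonneg _ (sq_nonneg _)
      have h := kerK_diff_ineq n x (by rw [abs_of_nonpos hx.2]; linarith [hx.1])
      rw [abs_of_nonpos hx.2, ← hcdef] at h
      have h2 := neg_abs_le (c * osc n x * osc (n + 1) x)
      have h3 : 0 ≤ c + x := by linarith [hx.1]
      nlinarith [mul_le_mul_of_nonneg_right h2 h3]
  have h := hmono (left_mem_Icc.2 ha0) (right_mem_Icc.2 ha0) ha0
  simp only [add_zero] at h
  rw [div_le_div_iff₀ (by linarith) (by linarith)] at h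
  exact h

lemma kerK_lower (N : ℕ) (hN : 2 ≤ N) (a : ℝ) (ha : |a| < Real.sqrt (2 * (N : ℝ))) :
    kerK N 0 0 * (Real.sqrt (2 * (N : ℝ)) - |a|) ≤ kerK N a a * Real.sqrt (2 * (N : ℝ)) := by
  obtain ⟨n, rfl⟩ : ∃ n, N = n + 1 := ⟨N - 1, by omega⟩
  push_cast at ha ⊢
  rcases le_total 0 a with h | h
  · rw [abs_of_nonneg h] at ha ⊢
    exact kerK_lower_pos n a h ha
  · rw [abs_of_nonpos h] at ha ⊢
    have := kerK_lower_neg n a h ha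
    rwa [sub_neg_eq_add]

lemma integrable_poly_gauss (p : Polynomial ℝ) :
    Integrable (fun x : ℝ => p.eval x * Real.exp (-x ^ 2)) := by
  induction p using Polynomial.induction_on' with
  | add p q hp hq =>
    refine (hp.add hq).congr (Eventually.of_forall fun x => ?_)
    simp [add_mul]
  | monomial n a =>
    have h := (integrable_rpow_mul_exp_neg_mul_sq (b := 1) one_pos (s := (n : ℝ))
      (by have : (0 : ℝ) ≤ n := by positivity
          linarith)).const_mul a
    refine h.congr (Eventually.of_forall fun x => ?_)
    simp [mul_assoc]

/-- The Gaussian pairing of two Hermite polynomials. -/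
noncomputable def ip (m n : ℕ) : ℝ :=
  ∫ x : ℝ, (hp m).eval x * (hp n).eval x * Real.exp (-x ^ 2)

lemma integrable_ip (p q : Polynomial ℝ) :
    Integrable (fun x : ℝ => p.eval x * q.eval x * Real.exp (-x ^ 2)) := by
  refine (integrable_poly_gauss (p * q)).congr (Eventually.of_forall fun x => ?_)
  simp

lemma ip_comm (m n : ℕ) : ip m n = ip n m := by
  unfold ip
  congr 1
  funext x
  ring

lemma ip_parts (m n : ℕ) :
    ip m (n + 1) = ∫ x : ℝ, (Polynomial.derivative (hp m)).eval x * (hp n).eval x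
      * Real.exp (-x ^ 2) := by
  have h := integral_mul_deriv_eq_deriv_mul_of_integrable
    (u := fun x : ℝ => (hp m).eval x)
    (u' := fun x : ℝ => (Polynomial.derivative (hp m)).eval x)
    (v := fun x : ℝ => (hp n).eval x * Real.exp (-x ^ 2))
    (v' := fun x : ℝ => -((hp (n + 1)).eval x * Real.exp (-x ^ 2)))
    (fun x _ => (hp m).hasDerivAt x) (fun x _ => hasDerivAt_hp_gauss n x)
    ((integrable_ip (hp m) (hp (n + 1))).neg.congr (Eventually.of_forall fun x => by
      simp; ring))
    ((integrable_ip (Polynomial.derivative (hp m)) (hp n)).congr (Eventually.of_forall fun x => by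
      simp; ring))
    ((integrable_ip (hp m) (hp n)).congr (Eventually.of_forall fun x => by
      simp; ring))
  simp only [mul_neg, integral_neg, neg_inj, ← mul_assoc] at h
  exact h

lemma ip_zero_succ (n : ℕ) : ip 0 (n + 1) = 0 := by
  rw [ip_parts]
  simp [hp]

lemma ip_succ_succ (m n : ℕ) : ip (m + 1) (n + 1) = 2 * ((m : ℝ) + 1) * ip m n := by
  rw [ip_parts, hp_deriv]
  unfold ip
  rw [← integral_const_mul]
  congr 1
  funext x
  simp
  ring

lemma ip_zero_zero : ip 0 0 = Real.sqrt Real.pi := by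
  have := integral_gaussian 1
  simpa [ip, hp] using this

lemma ip_eq (m n : ℕ) :
    ip m n = if m = n then Real.sqrt Real.pi * 2 ^ n * (n.factorial : ℝ) else 0 := by
  induction n generalizing m with
  | zero =>
    cases m with
    | zero => simp [ip_zero_zero]
    | succ m => rw [ip_comm, ip_zero_succ]; simp
  | succ n ih =>
    cases m with
    | zero => rw [ip_zero_succ]; simp
    | succ m =>
      rw [ip_succ_succ, ih]
      by_cases h : m = n
      · subst h
        simp [Nat.factorial_succ]
        ring
      · simp [h]

lemma osc_mul_eq (m n : ℕ) (x : ℝ) :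
    osc m x * osc n x = cn m * cn n * ((hp m).eval x * (hp n).eval x * Real.exp (-x ^ 2)) := by
  have : Real.exp (-x ^ 2) = Real.exp (-x ^ 2 / 2) * Real.exp (-x ^ 2 / 2) := by
    rw [← Real.exp_add]; congr 1; ring
  rw [osc_eq, osc_eq, this]
  ring

lemma osc_integrable (m n : ℕ) : Integrable (fun x : ℝ => osc m x * osc n x) := by
  refine ((integrable_ip (hp m) (hp n)).const_mul (cn m * cn n)).congr
    (Eventually.of_forall fun x => ?_)
  simp only [osc_mul_eq]

lemma osc_orthonormal (m n : ℕ) :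
    ∫ x : ℝ, osc m x * osc n x = if m = n then 1 else 0 := by
  simp only [osc_mul_eq]
  rw [integral_const_mul]
  have : ∫ x : ℝ, (hp m).eval x * (hp n).eval x * Real.exp (-x ^ 2) = ip m n := rfl
  rw [this, ip_eq]
  by_cases h : m = n
  · subst h
    simp only [if_true]
    linarith [cn_sq m]
  · simp [h]

lemma kerK_sq (N : ℕ) (a t : ℝ) :
    kerK N a t ^ 2 = ∑ i ∈ Finset.range N, ∑ j ∈ Finset.range N,
      (osc i a * osc j a) * (osc i t * osc j t) := by
  unfold kerK
  rw [sq, Finset.sum_mul_sum]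
  refine Finset.sum_congr rfl fun i _ => Finset.sum_congr rfl fun j _ => ?_
  ring

lemma kerK_sq_integrable (N : ℕ) (a : ℝ) : Integrable (fun t => kerK N a t ^ 2) := by
  simp only [kerK_sq]
  exact integrable_finsetSum _ fun i _ => integrable_finsetSum _ fun j _ =>
    (osc_integrable i j).const_mul _

/-- Reproducing property. -/
lemma kerK_sq_integral (N : ℕ) (a : ℝ) : ∫ t, kerK N a t ^ 2 = kerK N a a := by
  simp only [kerK_sq]
  rw [integral_finsetSum _ fun i _ => integrable_finsetSum _ fun j _ =>
    (osc_integrable i j).const_mul _]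
  unfold kerK
  refine Finset.sum_congr rfl fun i hi => ?_
  rw [integral_finsetSum _ fun j _ => (osc_integrable i j).const_mul _]
  simp only [integral_const_mul, osc_orthonormal]
  simp only [mul_ite, mul_one, mul_zero]
  rw [Finset.sum_ite_eq, if_pos hi]

lemma kerL_sq_integrable (N : ℕ) (hN : 0 < N) (b : ℝ) : Integrable (fun y => kerL N b y ^ 2) := by
  have hs : Real.sqrt (N : ℝ) ≠ 0 := by positivity
  have h := (((kerK_sq_integrable N (Real.sqrt N * b)).comp_mul_left' hs)).const_mul
    ((Real.sqrt (N : ℝ))⁻¹ ^ 2)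
  refine h.congr (Eventually.of_forall fun x => ?_)
  simp [kerL, mul_pow]

lemma kerL_sq_integral (N : ℕ) (hN : 0 < N) (b : ℝ) :
    ∫ y, kerL N b y ^ 2 = kerL N b b / N := by
  unfold kerL
  simp only [mul_pow]
  rw [integral_const_mul, Measure.integral_comp_mul_left
    (fun t => kerK N (Real.sqrt N * b) t ^ 2) (Real.sqrt (N : ℝ)), kerK_sq_integral]
  rw [abs_of_nonneg (by positivity), inv_pow, Real.sq_sqrt (by positivity)]
  simp only [smul_eq_mul]
  field_simp

lemma main_bound (N : ℕ) (hN : 0 < N) (b r ε c : ℝ) (hr : 0 < r) (hε : 0 < ε) (hc : 0 < c)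
    (hD : c ≤ kerL N b b) :
    |∫ y in {y : ℝ | r / (N : ℝ) ≤ |b - y|}, kerL N b y / (|b - y| * kerL N b b)|
      ≤ ε / 2 + Real.pi / (ε * r * c) := by
  set D := kerL N b b with hDdef
  have hD0 : 0 < D := hc.trans_le hD
  have hN' : (0 : ℝ) < N := by exact_mod_cast hN
  set ρ := r / (N : ℝ) with hρ
  have hρ0 : 0 < ρ := by positivity
  let g : ℝ → ℝ := fun y => (ε * N / (2 * D)) * kerL N b y ^ 2
    + (1 / (ε * N * D * ρ ^ 2)) * (1 + (ρ⁻¹ * (b - y)) ^ 2)⁻¹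
  have hI2 : Integrable (fun y : ℝ => (1 + (ρ⁻¹ * (b - y)) ^ 2)⁻¹) :=
    (integrable_inv_one_add_sq.comp_mul_left' (inv_ne_zero hρ0.ne')).comp_sub_left b
  have hI1 := kerL_sq_integrable N hN b
  have hg : Integrable g := (hI1.const_mul _).add (hI2.const_mul _)
  have hg0 : ∀ y, 0 ≤ g y := fun y => by positivity
  have hgInt : ∫ y, g y = ε / 2 + Real.pi / (ε * r * D) := by
    have e2 : ∫ y : ℝ, (1 + (ρ⁻¹ * (b - y)) ^ 2)⁻¹ = ρ * Real.pi := by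
      rw [integral_sub_left_eq_self (fun s : ℝ => (1 + (ρ⁻¹ * s) ^ 2)⁻¹) volume b,
        Measure.integral_comp_mul_left (fun s : ℝ => (1 + s ^ 2)⁻¹) ρ⁻¹,
        integral_univ_inv_one_add_sq, inv_inv, abs_of_pos hρ0, smul_eq_mul]
    have e1 : ∫ y, g y = (ε * N / (2 * D)) * (D / N) + (1 / (ε * N * D * ρ ^ 2)) * (ρ * Real.pi) := by
      rw [← e2, hDdef, ← kerL_sq_integral N hN b, ← integral_const_mul, ← integral_const_mul,
        ← integral_add (hI1.const_mul _) (hI2.const_mul _)]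
    rw [e1, hρ]
    field_simp
  have hS : MeasurableSet {y : ℝ | ρ ≤ |b - y|} :=
    measurableSet_le measurable_const (by fun_prop)
  have hle : ∀ y ∈ {y : ℝ | ρ ≤ |b - y|}, ‖kerL N b y / (|b - y| * D)‖ ≤ g y := by
    intro y hy
    have hy : ρ ≤ |b - y| := hy
    have hs0 : 0 < |b - y| := hρ0.trans_le hy
    rw [Real.norm_eq_abs, abs_div, abs_mul, abs_abs, abs_of_pos hD0]
    have hsq : |b - y| ^ 2 = (b - y) ^ 2 := sq_abs _
    have hL : |kerL N b y| ^ 2 = kerL N b y ^ 2 := sq_abs _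
    simp only [g]
    rw [mul_pow, ← hsq, ← hL]
    set s := |b - y|
    set l := |kerL N b y|
    have h1 : 1 / (2 * s ^ 2) ≤ 1 / ρ ^ 2 * (1 + ρ⁻¹ ^ 2 * s ^ 2)⁻¹ := by
      have : 1 / ρ ^ 2 * (1 + ρ⁻¹ ^ 2 * s ^ 2)⁻¹ = 1 / (ρ ^ 2 + s ^ 2) := by
        field_simp
      rw [this]
      apply one_div_le_one_div_of_le (by positivity)
      nlinarith
    have h2 : l / s ≤ ε * N / 2 * l ^ 2 + 1 / (ε * N) * (1 / (2 * s ^ 2)) := by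
      have h3 : 0 ≤ (ε * N * l - 1 / s) ^ 2 / (2 * (ε * N)) := by positivity
      have h4 : (ε * N * l - 1 / s) ^ 2 / (2 * (ε * N))
          = ε * N / 2 * l ^ 2 + 1 / (ε * N) * (1 / (2 * s ^ 2)) - l / s := by
        field_simp
        ring
      linarith
    calc l / (s * D) = (l / s) / D := by rw [div_div]
      _ ≤ (ε * N / 2 * l ^ 2 + 1 / (ε * N) * (1 / ρ ^ 2 * (1 + ρ⁻¹ ^ 2 * s ^ 2)⁻¹)) / D := by
        gcongr
        refine h2.trans ?_
        gcongr
      _ = _ := by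
        field_simp
  calc |∫ y in {y : ℝ | ρ ≤ |b - y|}, kerL N b y / (|b - y| * D)|
      ≤ ∫ y in {y : ℝ | ρ ≤ |b - y|}, g y :=
        norm_integral_le_of_norm_le hg.integrableOn
          ((ae_restrict_iff' hS).2 (Eventually.of_forall hle))
    _ ≤ ∫ y, g y := setIntegral_le_integral hg (Eventually.of_forall hg0)
    _ = ε / 2 + Real.pi / (ε * r * D) := hgInt
    _ ≤ _ := by
      have := Real.pi_pos
      gcongr

lemma kerL_lower (θ : ℝ) (hθ : |θ| < Real.sqrt 2) (R : ℕ) :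
    ∃ c : ℝ, 0 < c ∧ ∃ N0 : ℕ, 0 < N0 ∧ ∀ N : ℕ, N0 ≤ N → ∀ x : ℝ, |x| < (R : ℝ) →
      c ≤ kerL N (x / (N : ℝ) + θ) (x / (N : ℝ) + θ) := by
  set η := (Real.sqrt 2 - |θ|) / 2 with hη
  have hη0 : 0 < η := by rw [hη]; linarith
  have hs2 : 0 < Real.sqrt 2 := by positivity
  have hpi := Real.pi_pos
  obtain ⟨M, hM⟩ := exists_nat_gt ((R : ℝ) / η)
  refine ⟨Real.sqrt (1 / (2 * Real.pi)) * η / Real.sqrt 2, by positivity, M + 2, by omega, ?_⟩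
  intro N hN x hx
  have hN' : ((M : ℝ) + 2) ≤ N := by exact_mod_cast hN
  have hNpos : (0 : ℝ) < N := by
    have : (0 : ℝ) ≤ M := by positivity
    linarith
  set b := x / (N : ℝ) + θ
  have hb : |b| ≤ Real.sqrt 2 - η := by
    have h1 : |x / (N : ℝ)| ≤ η := by
      rw [abs_div, abs_of_pos hNpos, div_le_iff₀ hNpos]
      rw [div_lt_iff₀ hη0] at hM
      nlinarith
    calc |b| ≤ |x / (N : ℝ)| + |θ| := abs_add_le _ _
      _ ≤ Real.sqrt 2 - η := by rw [hη] at h1 ⊢; linarith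
  have hsN : 0 < Real.sqrt (N : ℝ) := by positivity
  have e2N : Real.sqrt (2 * (N : ℝ)) = Real.sqrt 2 * Real.sqrt N := Real.sqrt_mul (by norm_num) _
  have ea : |Real.sqrt (N : ℝ) * b| = Real.sqrt N * |b| := by rw [abs_mul, abs_of_pos hsN]
  have h := kerK_lower N (by omega) (Real.sqrt N * b) (by
    rw [ea, e2N]; nlinarith)
  rw [ea, e2N] at h
  have h0 : Real.sqrt (1 / (2 * Real.pi)) * Real.sqrt N ≤ kerK N 0 0 := by
    rw [← Real.sqrt_mul (by positivity)]
    refine Real.sqrt_le_iff.2 ⟨kerK_diag_nonneg N 0, ?_⟩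
    refine le_trans (le_of_eq ?_) (kerK_zero_lower N (by omega))
    ring
  set k0 := Real.sqrt (1 / (2 * Real.pi))
  have hk0 : 0 ≤ k0 := Real.sqrt_nonneg _
  have h1 : (k0 * Real.sqrt N) * (Real.sqrt N * η) ≤ kerK N (Real.sqrt N * b) (Real.sqrt N * b)
      * (Real.sqrt 2 * Real.sqrt N) := by
    refine le_trans ?_ h
    apply mul_le_mul h0 _ (by positivity) (kerK_diag_nonneg N 0)
    nlinarith
  have h2 : k0 * Real.sqrt N * η ≤ kerK N (Real.sqrt N * b) (Real.sqrt N * b) * Real.sqrt 2 := by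
    refine le_of_mul_le_mul_right ?_ hsN
    linarith
  unfold kerL
  rw [div_le_iff₀ hs2, inv_mul_eq_div, div_mul_eq_mul_div, le_div_iff₀ hsN]
  linarith

/-- Palm correction estimate, first power of the kernel (Lemma 4.5, second part). -/
theorem palm_correction_first_power (θ : ℝ) (hθ1 : -Real.sqrt 2 < θ) (hθ2 : θ < Real.sqrt 2)
    (R : ℕ) (hR : 1 ≤ R) :
    ∀ ε : ℝ, 0 < ε → ∃ r0 : ℝ, ∀ r : ℝ, r0 ≤ r → ∃ N0 : ℕ, ∀ N : ℕ, N0 ≤ N →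
      ∀ x : ℝ, |x| < (R : ℝ) →
      |∫ y in {y : ℝ | r / (N : ℝ) ≤ |x / (N : ℝ) + θ - y|},
          kerL N (x / (N : ℝ) + θ) y /
            (|x / (N : ℝ) + θ - y| *
              kerL N (x / (N : ℝ) + θ) (x / (N : ℝ) + θ))| < ε := by
  intro ε hε
  obtain ⟨c, hc, N0, hN0, hlow⟩ := kerL_lower θ (abs_lt.2 ⟨hθ1, hθ2⟩) R
  have hpi := Real.pi_pos
  refine ⟨4 * Real.pi / (ε ^ 2 * c), fun r hr => ⟨N0, fun N hN x hx => ?_⟩⟩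
  have hr0 : 0 < r := lt_of_lt_of_le (by positivity) hr
  refine (main_bound N (by omega) _ r ε c hr0 hε hc (hlow N hN x hx)).trans_lt ?_
  have h1 : Real.pi / (ε * r * c) ≤ ε / 4 := by
    rw [div_le_iff₀ (by positivity)] at hr ⊢
    nlinarith
  linarith
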